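/- Let q = p^e with p prime and e a positive integer, and m = 2r with r ≥ 2, and set n = q^{r−1}(q^r − q + 1). If p does not divide r, then the code \overline{C_D}' generated by the rows of [I_{m+1} | G_1] has length n + m + 1, dimension m + 1, and minimum distance exactly q^{r−1}(q^r − q^{r−1} − q + 1) + 1. -/

import Mathlib

open scoped Classical

noncomputable section

/-- The dual code under the standard inner product. -/
def dualCode {ι F : Type*} [Fintype ι] [CommRing F] (C : Set (ι → F)) : Set (ι → F) :=
  {u | ∀ v ∈ C, ∑ i, u i * v i = 0}

/-- `d` is the minimum distance of the code `C`: the smallest Hamming weight of a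
nonzero codeword. -/
def IsMinDist {ι F : Type*} [Fintype ι] [CommRing F] (C : Set (ι → F)) (d : ℕ) : Prop :=
  (∃ c ∈ C, c ≠ 0 ∧ hammingNorm c = d) ∧ ∀ c ∈ C, c ≠ 0 → d ≤ hammingNorm c

/-- The code generated by the rows of the block matrix `[I_k | G]`: the codeword
attached to a coefficient vector `v : Fin k → F` is `v` on the first `k`
coordinates and `v * G` on the remaining coordinates. -/
def genCode {ι F : Type*} [Fintype ι] [CommRing F] (k : ℕ) (G : Fin k → ι → F) :
    Set ((Fin k ⊕ ι) → F) :=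
  {w | ∃ v : Fin k → F, w = Sum.elim v fun d => ∑ j, v j * G j d}

theorem aux_T {F : Type} [Field F] [Fintype F] (ψ : AddChar F ℂ) (hψ : ψ.IsPrimitive) (s c : F) :
    ∑ y ∈ Finset.univ.erase (0 : F), ∑ z : F, ψ (-(z ^ 2 / y) * s - z * c) =
    ((if s = 0 then (if c = 0 then Fintype.card F * (Fintype.card F - 1) else 0)
      else (if c = 0 then 0 else Fintype.card F) : ℕ) : ℂ) := by
  have hq : 1 ≤ Fintype.card F := Fintype.card_pos
  have hin : ∀ b : F, ∑ y ∈ Finset.univ.erase (0 : F), ψ (-(b / y)) =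
      (if b = 0 then (Fintype.card F : ℂ) else 0) - 1 := by
    intro b
    have h := AddChar.sum_mulShift (ψ := ψ) (-b) hψ
    rw [← Finset.sum_erase_add _ _ (Finset.mem_univ (0 : F))] at h
    simp only [zero_mul, AddChar.map_zero_eq_one, neg_eq_zero] at h
    have h2 : ∑ y ∈ Finset.univ.erase (0 : F), ψ (-(b / y)) =
        ∑ y ∈ Finset.univ.erase (0 : F), ψ (y * -b) := by
      refine Finset.sum_bij' (fun y _ => y⁻¹) (fun y _ => y⁻¹) ?_ ?_ ?_ ?_ ?_
      · intro y hy; simpa using hy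
      · intro y hy; simpa using hy
      · intro y hy; simp
      · intro y hy; simp
      · intro y hy; congr 1; rw [div_eq_mul_inv]; ring
    rw [h2, eq_sub_iff_add_eq, h]
    push_cast
    rfl
  rw [Finset.sum_comm]
  have h1 : ∀ z : F, ∑ y ∈ Finset.univ.erase (0 : F), ψ (-(z ^ 2 / y) * s - z * c) =
      ((if z ^ 2 * s = 0 then (Fintype.card F : ℂ) else 0) - 1) * ψ (z * -c) := by
    intro z
    rw [← hin, Finset.sum_mul]
    refine Finset.sum_congr rfl fun y _ => ?_
    rw [← AddChar.map_add_eq_mul]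
    congr 1
    ring
  simp_rw [h1, sub_mul, Finset.sum_sub_distrib, one_mul]
  rw [AddChar.sum_mulShift (-c) hψ]
  by_cases hs : s = 0
  · simp only [hs, mul_zero, if_true, ← Finset.mul_sum]
    rw [AddChar.sum_mulShift (-c) hψ]
    by_cases hc : c = 0
    · simp [hc]; push_cast [hq]; ring
    · simp [hc]
  · have : ∀ z : F, (if z ^ 2 * s = 0 then (Fintype.card F : ℂ) else 0) * ψ (z * -c) =
       if z = 0 then (Fintype.card F : ℂ) else 0 := by
      intro z
      by_cases hz : z = 0
      · simp [hz]
      · simp [hz, hs]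
    simp_rw [this]
    by_cases hc : c = 0
    · simp [hs, hc]
    · simp [hs, hc]

theorem aux_count1 {F V : Type} [Field F] [Fintype F] [Fintype V] (ψ : AddChar F ℂ)
    (hψ : ψ.IsPrimitive) (Q : V → F) (K : ℂ)
    (h1 : ∀ y ≠ 0, ∑ x, ψ (y * Q x) = -K) :
    (Fintype.card F : ℂ) * ((Finset.univ.filter fun x => Q x = 0).card : ℂ) =
      Fintype.card V - (Fintype.card F - 1) * K := by
  have hq : 1 ≤ Fintype.card F := Fintype.card_pos
  have e : ∑ y : F, ∑ x, ψ (y * Q x) =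
      (Fintype.card F : ℂ) * ((Finset.univ.filter fun x => Q x = 0).card : ℂ) := by
    rw [Finset.sum_comm]
    simp_rw [AddChar.sum_mulShift _ hψ]
    push_cast
    rw [← Finset.sum_filter, Finset.sum_const, nsmul_eq_mul, mul_comm]
  rw [← e, ← Finset.sum_erase_add _ _ (Finset.mem_univ (0 : F)),
    Finset.sum_congr rfl (fun y hy => h1 y (Finset.ne_of_mem_erase hy))]
  simp [Finset.card_erase_of_mem]
  push_cast [hq]
  ring

theorem aux_count2 {F V : Type} [Field F] [Fintype F] [Fintype V] (ψ : AddChar F ℂ)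
    (hψ : ψ.IsPrimitive) (Q L : V → F) (K : ℂ) (s c : F)
    (h2 : ∀ z ≠ 0, ∑ x, ψ (z * L x) = 0)
    (h3 : ∀ y ≠ 0, ∀ z, ∑ x, ψ (y * Q x + z * L x) = -K * ψ (-(z ^ 2 / y) * s)) :
    (Fintype.card F : ℂ) ^ 2 * ((Finset.univ.filter fun x => Q x = 0 ∧ L x = c).card : ℂ) =
      Fintype.card V - K * ((if s = 0 then (if c = 0 then Fintype.card F * (Fintype.card F - 1) else 0)
      else (if c = 0 then 0 else Fintype.card F) : ℕ) : ℂ) := by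
  have e : ∑ y : F, ∑ z : F, ∑ x, ψ (y * Q x + z * L x - z * c) =
      (Fintype.card F : ℂ) ^ 2 *
        ((Finset.univ.filter fun x => Q x = 0 ∧ L x = c).card : ℂ) := by
    have : ∑ y : F, ∑ z : F, ∑ x, ψ (y * Q x + z * L x - z * c) =
        ∑ x, (∑ y : F, ψ (y * Q x)) * ∑ z : F, ψ (z * (L x - c)) := by
      simp_rw [Finset.sum_mul_sum]
      rw [Finset.sum_congr rfl fun y _ => Finset.sum_comm, Finset.sum_comm]
      simp_rw [← AddChar.map_add_eq_mul]
      refine Finset.sum_congr rfl fun x _ => Finset.sum_congr rfl fun y _ =>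
        Finset.sum_congr rfl fun z _ => ?_
      congr 1; ring
    rw [this]
    simp_rw [AddChar.sum_mulShift _ hψ]
    have : ∀ x, (((if Q x = 0 then Fintype.card F else 0 : ℕ) : ℂ) *
        ((if L x - c = 0 then Fintype.card F else 0 : ℕ) : ℂ)) =
        if Q x = 0 ∧ L x = c then (Fintype.card F : ℂ) ^ 2 else 0 := by
      intro x
      by_cases h : Q x = 0 <;> by_cases h' : L x = c <;> simp [h, h', sub_eq_zero, sq]
    simp_rw [this]
    rw [← Finset.sum_filter, Finset.sum_const, nsmul_eq_mul, mul_comm]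
  have hs : ∀ y z : F, ∑ x, ψ (y * Q x + z * L x - z * c) =
      (∑ x, ψ (y * Q x + z * L x)) * ψ (- (z * c)) := by
    intro y z
    rw [Finset.sum_mul]
    simp_rw [← AddChar.map_add_eq_mul, sub_eq_add_neg]
  rw [← e, ← Finset.sum_erase_add _ _ (Finset.mem_univ (0 : F)), ← aux_T ψ hψ s c]
  have z0 : ∑ z : F, ∑ x, ψ (0 * Q x + z * L x - z * c) = Fintype.card V := by
    rw [Finset.sum_eq_single 0]
    · simp
    · intro z _ hz
      rw [hs]
      simp [h2 z hz]
    · simp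
  rw [z0, Finset.mul_sum, add_comm, sub_eq_add_neg, ← Finset.sum_neg_distrib]
  congr 1
  refine Finset.sum_congr rfl fun y hy => ?_
  rw [Finset.mul_sum, ← Finset.sum_neg_distrib]
  refine Finset.sum_congr rfl fun z _ => ?_
  rw [hs, h3 y (Finset.ne_of_mem_erase hy), sub_eq_add_neg, AddChar.map_add_eq_mul]
  ring

/-- sum over norm -/
theorem aux_norm {E L : Type} [Field E] [Field L] [Fintype E] [Fintype L] [Algebra E L]
    (N : ℕ) (hE : Fintype.card E = N) (hL : Fintype.card L = N ^ 2)
    (χ : AddChar E ℂ) (hχ : χ ≠ 1) :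
    ∑ x : L, χ (Algebra.norm E x) = - (N : ℂ) := by
  have hN : 1 < N := hE ▸ Fintype.one_lt_card
  let f : Lˣ →* Eˣ := Units.map (Algebra.norm E (S := L))
  have hf : Function.Surjective f := FiniteField.unitsMap_norm_surjective E L
  have hfib : ∀ u : Eˣ, (Finset.univ.filter fun x => f x = u).card = N + 1 := by
    have hconst : ∀ u : Eˣ, (Finset.univ.filter fun x => f x = u).card =
      (Finset.univ.filter fun x => f x = 1).card := fun u =>
        MonoidHom.card_fiber_eq_of_mem_range f (hf u) (hf 1)
    have htot := Finset.card_eq_sum_card_fiberwise (f := f) (s := Finset.univ) (t := Finset.univ)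
      (by simp)
    simp_rw [hconst] at htot ⊢
    rw [Finset.sum_const, Finset.card_univ, Finset.card_univ, Fintype.card_units, Fintype.card_units, hE, hL, smul_eq_mul] at htot
    intro _
    have : N ^ 2 - 1 = (N - 1) * (N + 1) := by
      rw [mul_comm, ← Nat.sq_sub_sq N 1]
    rw [this] at htot
    exact (Nat.eq_of_mul_eq_mul_left (by omega) htot).symm
  have hu : ∀ (M : Type) [Field M] [Fintype M] (φ : M → ℂ), ∑ x, φ x = φ 0 + ∑ u : Mˣ, φ u := by
    intro M _ _ φ
    rw [← Finset.add_sum_erase _ _ (Finset.mem_univ (0 : M))]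
    congr 1
    symm
    refine Finset.sum_bij (fun u _ => (u : M)) (by simp) (fun a _ b _ h => Units.ext h) ?_ (by simp)
    intro b hb
    exact ⟨Units.mk0 b (Finset.ne_of_mem_erase hb), by simp, rfl⟩
  rw [hu]
  have h0 := AddChar.sum_eq_zero_of_ne_one hχ
  rw [hu] at h0
  have : ∑ u : Lˣ, χ (Algebra.norm E (u : L)) = (N + 1 : ℂ) * ∑ v : Eˣ, χ v := by
    have h := Finset.sum_fiberwise' (Finset.univ : Finset Lˣ) f (fun v => χ (v : E))
    have h' : ∑ u : Lˣ, χ (Algebra.norm E (u : L)) = ∑ i, χ ((f i : Eˣ) : E) := rfl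
    rw [h', ← h, Finset.mul_sum]
    refine Finset.sum_congr rfl fun v _ => ?_
    rw [Finset.sum_const, hfib, nsmul_eq_mul]; push_cast; ring
  rw [this]
  simp only [AddChar.map_zero_eq_one, Algebra.norm_zero] at h0 ⊢
  linear_combination (N + 1 : ℂ) * h0

theorem aux_field (q r : ℕ) (hr : 0 < r)
    (Fq Fr Fm : Type) [Field Fq] [Field Fr] [Field Fm]
    [Fintype Fq] [Fintype Fr] [Fintype Fm]
    [Algebra Fq Fr] [Algebra Fr Fm] [Algebra Fq Fm] [IsScalarTower Fq Fr Fm]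
    (hcq : Fintype.card Fq = q) (hcr : Fintype.card Fr = q ^ r)
    (hcm : Fintype.card Fm = q ^ (2 * r))
    (g : Fm → Fr) (hg : ∀ x : Fm, algebraMap Fr Fm (g x) = x ^ (q ^ r + 1)) :
    (∀ x, g x = Algebra.norm Fr x) ∧
    ∀ (x b : Fm) (t : Fq), Algebra.trace Fq Fr (g (x + algebraMap Fq Fm t * b ^ (q ^ r))) =
      Algebra.trace Fq Fr (g x) + t * Algebra.trace Fq Fm (b * x)
        + t ^ 2 * Algebra.trace Fq Fr (g b) := by
  have hq : 1 < q := hcq ▸ Fintype.one_lt_card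
  have hN : 1 < q ^ r := Nat.one_lt_pow (by omega) hq
  have hfin : Module.finrank Fr Fm = 2 := by
    have h := Module.card_eq_pow_finrank (K := Fr) (V := Fm)
    rw [hcm, hcr, mul_comm 2 r, pow_mul] at h
    exact (Nat.pow_right_injective hN h).symm
  have hsq : ∀ x : Fm, (x ^ (q ^ r)) ^ (q ^ r) = x := by
    intro x
    rw [← pow_mul, ← pow_add, ← two_mul, ← hcm, FiniteField.pow_card]
  have hadd : ∀ x y : Fm, (x + y) ^ (q ^ r) = x ^ (q ^ r) + y ^ (q ^ r) := by
    intro x y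
    have := map_add (FiniteField.frobeniusAlgHom Fr Fm) x y
    simpa [FiniteField.coe_frobeniusAlgHom, hcr] using this
  have hc : ∀ t : Fr, (algebraMap Fr Fm t) ^ (q ^ r) = algebraMap Fr Fm t := by
    intro t
    rw [← map_pow, ← hcr, FiniteField.pow_card]
  have htr : ∀ w : Fm, algebraMap Fr Fm (Algebra.trace Fr Fm w) = w + w ^ (q ^ r) := by
    intro w
    rw [FiniteField.algebraMap_trace_eq_sum_pow, hfin, Finset.sum_range_succ, Finset.sum_range_one,
      Nat.card_eq_fintype_card, hcr]
    simp
  constructor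
  · intro x
    apply (algebraMap Fr Fm).injective
    rw [hg, FiniteField.algebraMap_norm_eq_prod_pow, hfin, Finset.prod_range_succ,
      Finset.prod_range_one, Nat.card_eq_fintype_card, hcr]
    ring
  · intro x b t
    have key : g (x + algebraMap Fq Fm t * b ^ (q ^ r)) =
        g x + t • Algebra.trace Fr Fm (b * x) + (t ^ 2) • g b := by
      apply (algebraMap Fr Fm).injective
      rw [map_add, map_add, Algebra.smul_def, Algebra.smul_def,
        RingHom.map_mul (algebraMap Fr Fm), RingHom.map_mul (algebraMap Fr Fm), hg, hg, hg, htr,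
        ← IsScalarTower.algebraMap_apply, ← IsScalarTower.algebraMap_apply, pow_succ, hadd,
        mul_pow, hsq, IsScalarTower.algebraMap_apply Fq Fr Fm, hc, map_pow,
        IsScalarTower.algebraMap_apply Fq Fr Fm, mul_pow]
      ring
    rw [key, map_add, map_add, map_smul, map_smul, Algebra.trace_trace, smul_eq_mul, smul_eq_mul]

/-- all counts -/
theorem aux_counts (q r : ℕ) (hr : 0 < r)
    (Fq Fr Fm : Type) [Field Fq] [Field Fr] [Field Fm]
    [Fintype Fq] [Fintype Fr] [Fintype Fm]
    [Algebra Fq Fr] [Algebra Fr Fm] [Algebra Fq Fm] [IsScalarTower Fq Fr Fm]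
    (hcq : Fintype.card Fq = q) (hcr : Fintype.card Fr = q ^ r)
    (hcm : Fintype.card Fm = q ^ (2 * r))
    (g : Fm → Fr) (hg : ∀ x : Fm, algebraMap Fr Fm (g x) = x ^ (q ^ r + 1)) :
    (q * (Finset.univ.filter fun x : Fm => Algebra.trace Fq Fr (g x) = 0).card
      + (q - 1) * q ^ r = q ^ (2 * r)) ∧
    ∀ b : Fm, b ≠ 0 → ∀ c : Fq, q ^ 2 * (Finset.univ.filter fun x : Fm =>
        Algebra.trace Fq Fr (g x) = 0 ∧ Algebra.trace Fq Fm (b * x) = c).card +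
      q ^ r * (if Algebra.trace Fq Fr (g b) = 0 then (if c = 0 then q * (q - 1) else 0)
      else (if c = 0 then 0 else q)) = q ^ (2 * r) := by
  obtain ⟨hnorm, hquad⟩ := aux_field q r hr Fq Fr Fm hcq hcr hcm g hg
  have hq : 1 < q := hcq ▸ Fintype.one_lt_card
  let ψ := AddChar.FiniteField.primitiveChar_to_Complex Fq
  have hψ : ψ.IsPrimitive := AddChar.FiniteField.primitiveChar_to_Complex_isPrimitive Fq
  have hsurj : ∀ (E : Type) [Field E] [Fintype E] [Algebra Fq E] (z : Fq) (b : E), z ≠ 0 → b ≠ 0 →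
      ∃ χ : AddChar E ℂ, χ ≠ 1 ∧ ∀ x, χ x = ψ (z * Algebra.trace Fq E (b * x)) := by
    intro E _ _ _ z b hz hb
    refine ⟨(AddChar.mulShift ψ z).compAddMonoidHom
      ((Algebra.trace Fq E).toAddMonoidHom.comp (AddMonoidHom.mulLeft b)), ?_, ?_⟩
    · have h1 : AddChar.mulShift ψ z ≠ 1 := hψ hz
      obtain ⟨t, ht⟩ := AddChar.ne_one_iff.1 h1
      obtain ⟨x, hx⟩ := Algebra.trace_surjective Fq E t
      refine AddChar.ne_one_iff.2 ⟨b⁻¹ * x, ?_⟩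
      simpa [hb, hx] using ht
    · intro x
      simp [AddChar.mulShift_apply]
  have h1 : ∀ y : Fq, y ≠ 0 → ∑ x : Fm, ψ (y * Algebra.trace Fq Fr (g x)) = -((q ^ r : ℕ) : ℂ) := by
    intro y hy
    obtain ⟨χ, hχ, hχ'⟩ := hsurj Fr y 1 hy one_ne_zero
    rw [← aux_norm (E := Fr) (L := Fm) (q ^ r) hcr (by rw [hcm, mul_comm, pow_mul]) χ hχ]
    refine Finset.sum_congr rfl fun x _ => ?_
    rw [hχ', hnorm, one_mul]
  constructor
  · have h := aux_count1 ψ hψ (fun x : Fm => Algebra.trace Fq Fr (g x)) _ h1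
    rw [hcq, hcm] at h
    have : (((q - 1 : ℕ) : ℂ)) = q - 1 := by push_cast [hq.le]; ring
    rw [← this] at h
    rw [← Nat.cast_inj (R := ℂ)]
    push_cast at h ⊢
    linear_combination h
  · intro b hb c
    have h2 : ∀ z : Fq, z ≠ 0 → ∑ x : Fm, ψ (z * Algebra.trace Fq Fm (b * x)) = 0 := by
      intro z hz
      obtain ⟨χ, hχ, hχ'⟩ := hsurj Fm z b hz hb
      simp_rw [← hχ']
      exact AddChar.sum_eq_zero_of_ne_one hχ
    have h3 : ∀ y : Fq, y ≠ 0 → ∀ z : Fq, ∑ x : Fm, ψ (y * Algebra.trace Fq Fr (g x) +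
        z * Algebra.trace Fq Fm (b * x)) = -((q ^ r : ℕ) : ℂ) *
          ψ (-(z ^ 2 / y) * Algebra.trace Fq Fr (g b)) := by
      intro y hy z
      rw [← h1 y hy, ← Equiv.sum_comp (Equiv.addRight (algebraMap Fq Fm (z / y) * b ^ (q ^ r)))
        (fun x : Fm => ψ (y * Algebra.trace Fq Fr (g x))), Finset.sum_mul]
      refine Finset.sum_congr rfl fun x _ => ?_
      rw [← AddChar.map_add_eq_mul, Equiv.coe_addRight, hquad]
      congr 1
      field_simp
      ring
    have h := aux_count2 ψ hψ (fun x : Fm => Algebra.trace Fq Fr (g x))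
      (fun x : Fm => Algebra.trace Fq Fm (b * x)) _ _ c h2 h3
    rw [hcq, hcm] at h
    rw [← Nat.cast_inj (R := ℂ)]
    push_cast at h ⊢
    linear_combination h

/-- independence of powers of a primitive element -/
theorem aux_indep (Fq Fm : Type) [Field Fq] [Field Fm] [Fintype Fq] [Fintype Fm] [Algebra Fq Fm]
    (q m : ℕ) (hcq : Fintype.card Fq = q) (hcm : Fintype.card Fm = q ^ m)
    (α : Fm) (hα : ∀ y : Fm, y ≠ 0 → ∃ k : ℕ, α ^ k = y) :
    LinearIndependent Fq (fun i : Fin m => α ^ (i : ℕ)) := by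
  have hq : 1 < q := hcq ▸ Fintype.one_lt_card
  have hfin : Module.finrank Fq Fm = m := by
    have h := Module.card_eq_pow_finrank (K := Fq) (V := Fm)
    rw [hcm, hcq] at h
    exact (Nat.pow_right_injective hq h).symm
  have htop : IntermediateField.adjoin Fq {α} = ⊤ := by
    rw [eq_top_iff]
    intro y _
    by_cases hy : y = 0
    · rw [hy]; exact zero_mem _
    · obtain ⟨k, rfl⟩ := hα y hy
      exact pow_mem (IntermediateField.mem_adjoin_simple_self Fq α) k
  have hdeg : (minpoly Fq α).natDegree = m := by
    rw [← IntermediateField.adjoin.finrank (Algebra.IsIntegral.isIntegral α), htop,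
      IntermediateField.finrank_top', hfin]
  have := linearIndependent_pow (K := Fq) α
  rw [hdeg] at this
  exact this

theorem stmt10 (p a q r m n : ℕ) (hp : p.Prime) (ha : 0 < a) (hqpa : q = p ^ a)
    (hr : 2 ≤ r) (hm : m = 2 * r) (hpr : ¬ p ∣ r)
    (hn : n = q ^ (r - 1) * (q ^ r - q + 1))
    (Fq Fr Fm : Type) [Field Fq] [Field Fr] [Field Fm]
    [Fintype Fq] [Fintype Fr] [Fintype Fm]
    [Algebra Fq Fr] [Algebra Fr Fm] [Algebra Fq Fm] [IsScalarTower Fq Fr Fm]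
    (hcq : Fintype.card Fq = q) (hcr : Fintype.card Fr = q ^ r)
    (hcm : Fintype.card Fm = q ^ m)
    (g : Fm → Fr) (hg : ∀ x : Fm, algebraMap Fr Fm (g x) = x ^ (q ^ r + 1))
    -- `α` is a primitive element of `F_{q^m}`
    (α : Fm) (hα : ∀ y : Fm, y ≠ 0 → ∃ k : ℕ, α ^ k = y)
    -- the matrix `G₁`
    (G1 : Fin (m + 1) → {x : Fm // Algebra.trace Fq Fr (g x) = 0} → Fq)
    (hG1 : ∀ k d, G1 k d =
      if (k : ℕ) = 0 then 1
      else Algebra.trace Fq Fm (α ^ ((k : ℕ) - 1) * d.1)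
        + (if (k : ℕ) = 2 then 1 else 0))
    (C' : Set ((Fin (m + 1) ⊕ {x : Fm // Algebra.trace Fq Fr (g x) = 0}) → Fq))
    (hC' : C' = genCode (m + 1) G1) :
    -- length `n + m + 1`
    Fintype.card (Fin (m + 1) ⊕ {x : Fm // Algebra.trace Fq Fr (g x) = 0})
      = n + m + 1 ∧
    -- dimension `m + 1`
    Nat.card C' = q ^ (m + 1) ∧
    -- minimum distance exactly `q^{r-1}(q^r - q^{r-1} - q + 1) + 1`
    IsMinDist C' (q ^ (r - 1) * (q ^ r - q ^ (r - 1) - q + 1) + 1) := by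
  classical
  have hq : 1 < q := hcq ▸ Fintype.one_lt_card
  subst hm
  obtain ⟨hD, hN⟩ := aux_counts q r (by omega) Fq Fr Fm hcq hcr hcm g hg
  have hli := aux_indep Fq Fm q (2 * r) hcq hcm α hα
  -- arithmetic
  obtain ⟨s, rfl⟩ : ∃ s, r = s + 2 := ⟨r - 2, by omega⟩
  have e1 : s + 2 - 1 = s + 1 := by omega
  rw [e1] at hn ⊢
  have hcD : Fintype.card {x : Fm // Algebra.trace Fq Fr (g x) = 0} = n := by
    rw [Fintype.card_subtype, hn]
    have hle : q ≤ q ^ (s + 2) := Nat.le_self_pow (by omega) q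
    have hq0 : 0 < q := by omega
    refine Nat.eq_of_mul_eq_mul_left hq0 ?_
    zify [hle, hq.le] at hD ⊢
    linear_combination hD
  have hd : q ^ (s + 1) * (q ^ (s + 2) - q ^ (s + 1) - q + 1) + q ^ (2 * s + 2) = n := by
    have h1 : q ^ (s + 1) ≤ q ^ (s + 2) := Nat.pow_le_pow_right (by omega) (by omega)
    have h0 : q ≤ q ^ (s + 1) := Nat.le_self_pow (by omega) q
    have h2 : q ≤ q ^ (s + 2) - q ^ (s + 1) := by
      have : q ^ (s + 1) * 2 ≤ q ^ (s + 2) := by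
        rw [pow_succ q (s + 1)]; exact Nat.mul_le_mul_left _ hq
      omega
    have h3 : q ≤ q ^ (s + 2) := h0.trans h1
    rw [hn]
    zify [h1, h2, h3]
    ring
  set dd := q ^ (s + 1) * (q ^ (s + 2) - q ^ (s + 1) - q + 1) with hdd
  have hqq : q ^ (2 * (s + 2)) = q ^ 2 * q ^ (2 * s + 2) := by ring
  -- codeword values
  let b : (Fin (2 * (s + 2) + 1) → Fq) → Fm := fun v => ∑ i : Fin (2 * (s + 2)), v i.succ • α ^ (i : ℕ)
  let c : (Fin (2 * (s + 2) + 1) → Fq) → Fq := fun v =>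
    v 0 + ∑ i : Fin (2 * (s + 2)), v i.succ * (if (i : ℕ) + 1 = 2 then 1 else 0)
  have hval : ∀ v (d : {x : Fm // Algebra.trace Fq Fr (g x) = 0}),
      ∑ j, v j * G1 j d = c v + Algebra.trace Fq Fm (b v * d.1) := by
    intro v d
    rw [Fin.sum_univ_succ, hG1]
    simp only [b, c, Finset.sum_mul, map_sum, smul_mul_assoc, map_smul, smul_eq_mul]
    rw [add_assoc, ← Finset.sum_add_distrib]
    congr 1
    · simp
    · refine Finset.sum_congr rfl fun i _ => ?_
      rw [hG1]
      simp only [Fin.val_succ, Nat.add_sub_cancel, Nat.succ_ne_zero, if_false]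
      ring
  have hwt : ∀ v, hammingNorm (Sum.elim v fun d => ∑ j, v j * G1 j d) =
      hammingNorm v + (Finset.univ.filter fun d : {x : Fm // Algebra.trace Fq Fr (g x) = 0} =>
        c v + Algebra.trace Fq Fm (b v * d.1) ≠ 0).card := by
    intro v
    simp only [hammingNorm, hval]
    simp only [Finset.card_filter, Fintype.sum_sum_type, Sum.elim_inl, Sum.elim_inr]
    congr!
  have hz : ∀ v, (Finset.univ.filter fun x : Fm => Algebra.trace Fq Fr (g x) = 0 ∧
        Algebra.trace Fq Fm (b v * x) = - c v).card +
      (Finset.univ.filter fun d : {x : Fm // Algebra.trace Fq Fr (g x) = 0} =>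
        c v + Algebra.trace Fq Fm (b v * d.1) ≠ 0).card = n := by
    intro v
    rw [← hcD, ← Finset.card_univ, ← Finset.card_filter_add_card_filter_not
      (s := (Finset.univ : Finset {x : Fm // Algebra.trace Fq Fr (g x) = 0}))
      (fun d => c v + Algebra.trace Fq Fm (b v * d.1) = 0)]
    congr 1
    symm
    refine Finset.card_bij (fun d _ => d.1) ?_ (fun _ _ _ _ h => Subtype.ext h) ?_
    · intro d hd
      simp only [Finset.mem_filter, Finset.mem_univ, true_and] at hd ⊢
      exact ⟨d.2, by linear_combination hd⟩
    · intro x hx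
      simp only [Finset.mem_filter, Finset.mem_univ, true_and] at hx
      refine ⟨⟨x, hx.1⟩, ?_, rfl⟩
      simp only [Finset.mem_filter, Finset.mem_univ, true_and]
      rw [hx.2]; ring
  have hb : ∀ v, b v = 0 → ∀ i : Fin (2 * (s + 2)), v i.succ = 0 := by
    intro v hv
    exact Fintype.linearIndependent_iff.1 hli (fun i => v i.succ) hv
  refine ⟨?_, ?_, ?_, ?_⟩
  · rw [Fintype.card_sum, hcD, Fintype.card_fin]; ring
  · have : C' = Set.range (fun v : Fin (2 * (s + 2) + 1) → Fq =>
        (Sum.elim v fun d => ∑ j, v j * G1 j d :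
          (Fin (2 * (s + 2) + 1) ⊕ {x : Fm // Algebra.trace Fq Fr (g x) = 0}) → Fq)) := by
      rw [hC']
      ext w
      simp only [genCode, Set.mem_setOf_eq, Set.mem_range, eq_comm]
    rw [this, Nat.card_range_of_injective]
    · simp [hcq]
    · intro v w h
      funext i
      exact congrFun h (Sum.inl i)
  · let i0 : Fin (2 * (s + 2)) := ⟨0, by omega⟩
    let v : Fin (2 * (s + 2) + 1) → Fq := Pi.single i0.succ 1
    have hbv : b v = 1 := by
      simp only [b, v]
      rw [Finset.sum_eq_single i0]
      · simp [i0]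
      · intro i _ hi
        have : i.succ ≠ i0.succ := fun h => hi (Fin.succ_injective _ h)
        rw [Pi.single_eq_of_ne this, zero_smul]
      · simp
    have hcv : c v = 0 := by
      simp only [c, v]
      rw [Pi.single_eq_of_ne (Fin.succ_ne_zero i0).symm, zero_add]
      refine Finset.sum_eq_zero fun i _ => ?_
      by_cases hi : i = i0
      · subst hi; simp [i0]
      · have : i.succ ≠ i0.succ := fun h => hi (Fin.succ_injective _ h)
        rw [Pi.single_eq_of_ne this, zero_mul]
    have hv1 : hammingNorm v = 1 := by
      simp only [hammingNorm]
      rw [Finset.card_eq_one]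
      refine ⟨i0.succ, ?_⟩
      ext i
      simp [v, Pi.single_apply]
    refine ⟨Sum.elim v fun d => ∑ j, v j * G1 j d, ?_, ?_, ?_⟩
    · rw [hC']; exact ⟨v, rfl⟩
    · intro h
      have := congrFun h (Sum.inl i0.succ)
      simp [v] at this
    · rw [hwt, hv1]
      have h1 := hz v
      have h2 := hN (b v) (by rw [hbv]; exact one_ne_zero) (- c v)
      have htr : Algebra.trace Fq Fr (g (b v)) ≠ 0 := by
        have hg1 : g 1 = 1 := by
          apply (algebraMap Fr Fm).injective
          rw [hg]; simp
        have hfin : Module.finrank Fq Fr = s + 2 := by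
          have h := Module.card_eq_pow_finrank (K := Fq) (V := Fr)
          rw [hcr, hcq] at h
          exact (Nat.pow_right_injective hq h).symm
        rw [hbv, hg1, ← map_one (algebraMap Fq Fr), Algebra.trace_algebraMap, hfin, nsmul_eq_mul,
          mul_one]
        have : Fact p.Prime := ⟨hp⟩
        have : CharP Fq p := charP_of_card_eq_prime_pow (f := a) (by rw [hcq, hqpa])
        intro h
        exact hpr ((CharP.cast_eq_zero_iff Fq p _).1 h)
      rw [if_neg htr, if_pos (by rw [hcv, neg_zero]), mul_zero, add_zero, hqq] at h2
      have h3 := Nat.eq_of_mul_eq_mul_left (by positivity) h2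
      omega
  · intro w hw hw0
    rw [hC'] at hw
    obtain ⟨v, rfl⟩ := hw
    rw [hwt]
    have hv0 : v ≠ 0 := by
      rintro rfl
      apply hw0
      funext i
      cases i <;> simp
    have hv1 : 1 ≤ hammingNorm v := Nat.one_le_iff_ne_zero.2 (by simpa using hv0)
    have h1 := hz v
    by_cases hbv : b v = 0
    · have hs := hb v hbv
      have hv00 : v 0 ≠ 0 := by
        intro h
        apply hv0
        funext i
        exact Fin.cases h hs i
      have hcv : c v ≠ 0 := by
        simp only [c, hs]
        simpa using hv00
      have : (Finset.univ.filter fun x : Fm => Algebra.trace Fq Fr (g x) = 0 ∧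
        Algebra.trace Fq Fm (b v * x) = - c v).card = 0 := by
        rw [Finset.card_eq_zero, Finset.filter_eq_empty_iff]
        rintro x - ⟨-, hx⟩
        rw [hbv, zero_mul, map_zero] at hx
        exact hcv (neg_eq_zero.1 hx.symm)
      omega
    · have h2 := hN (b v) hbv (- c v)
      rw [hqq] at h2
      have h3 := Nat.le_of_mul_le_mul_left ((Nat.le_add_right _ _).trans h2.le) (by positivity)
      omega
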